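/- Let Σ denote the punctured torus T² ∖ {pt} equipped with a symplectic (area) form of total area one, and let B²_R denote the open disk of radius R in ℝ² with the standard area form. For every R > 0 there exists a smooth symplectic embedding of B²_R × Σ (with the product symplectic form) into ℝ⁴ with its standard symplectic form dp_1∧dq_1 + dp_2∧dq_2. -/

import Mathlib

/-!
Lemma 3 (after Guth): for every `R > 0` the product `B²_R × Σ` embeds symplectically
into `ℝ⁴`, where `Σ = T² ∖ {pt}` carries a symplectic form of total area one.

We use the flat model `T² = ℝ²/ℤ²` with its standard area form (total area one; by
Moser's theorem this is no loss of generality), the puncture being the lattice point.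
A smooth map `B²_R × Σ → ℝ⁴` is the same thing as a smooth map
`F : B²_R × (ℝ² ∖ ℤ²) → ℝ⁴` which is invariant under the deck transformation group
`ℤ²` acting on the second factor; `F` is a symplectic embedding iff moreover it pulls
the standard symplectic form of `ℝ⁴` back to the product of the standard area forms
and is injective modulo the `ℤ²`-action.
-/

open MeasureTheory Metric

noncomputable section

abbrev Pl := EuclideanSpace ℝ (Fin 2)
abbrev E4 := EuclideanSpace ℝ (Fin 4)

/-- The standard area form of `ℝ²`. -/
def area2 (a b : Pl) : ℝ := a 0 * b 1 - a 1 * b 0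

/-- The standard symplectic form `dp₁∧dq₁ + dp₂∧dq₂` of `ℝ⁴`,
with coordinates `(p₁,q₁,p₂,q₂)`. -/
def symp4 (u v : E4) : ℝ := u 0 * v 1 - u 1 * v 0 + (u 2 * v 3 - u 3 * v 2)

/-- A point of the lattice `ℤ² ⊂ ℝ²` (a lift of the puncture of `T² ∖ {pt}`). -/
def IsLatticePt (a : Pl) : Prop := ∀ i, ∃ z : ℤ, a i = (z : ℝ)

/-- The lifted domain: `B²_R × (ℝ² ∖ ℤ²)`, the universal-cover picture of
`B²_R × (T² ∖ {pt})`. -/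
def liftedDomain (R : ℝ) : Set (Pl × Pl) :=
  (ball (0 : Pl) R) ×ˢ {z : Pl | ¬ IsLatticePt z}

/-!
In action-angle coordinates `(I₁, θ₁, I₂, θ₂)` on `ℝ⁴` the angles sweep out a torus, and a linear
change of coordinates turns `dI₁ ∧ dθ₁ + dI₂ ∧ dθ₂` into the product form on a disk times this
torus, up to a multiple of `dθ₁ ∧ dθ₂`. That multiple is not exact on the whole torus, but it is
exact away from a neighbourhood of a point, where its primitive can be absorbed into the actions.
Hence it suffices that the torus factor misses such a neighbourhood. A generating function yields a
map of the punctured torus into itself that achieves this: it opens the puncture into a large slit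
and multiplies the area by a constant `μ`. Taking `μ` small compared with `R⁻²` leaves room for a
disk of radius `R`, since the angles then depend only weakly on the disk factor.
-/

open Function Real Set
open scoped ContDiff Topology

section NearestInteger

theorem le_norm_unitAddCircle_of_mem_Icc {s x : ℝ} {n : ℤ} (hx : x ∈ Icc (n + s) (n + 1 - s)) :
    s ≤ ‖(x : UnitAddCircle)‖ := by
  rw [UnitAddCircle.norm_eq]
  obtain h | h := Int.lt_or_le n (round x)
  · have : (n : ℝ) + 1 ≤ round x := by exact_mod_cast h
    linarith [neg_le_abs (x - round x), hx.2]
  · have : (round x : ℝ) ≤ n := by exact_mod_cast h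
    linarith [le_abs_self (x - round x), hx.1]

theorem norm_unitAddCircle_le_add_abs_sub (x y : ℝ) :
    ‖(x : UnitAddCircle)‖ ≤ ‖(y : UnitAddCircle)‖ + |x - y| := by
  have hxy : (x : UnitAddCircle) = y + (x - y : ℝ) := by rw [← AddCircle.coe_add]; ring_nf
  rw [hxy]
  exact (norm_add_le _ _).trans (add_le_add_right QuotientAddGroup.norm_mk_le_norm _)

theorem cos_two_pi_mul_norm_unitAddCircle (x : ℝ) :
    cos (2 * π * ‖(x : UnitAddCircle)‖) = cos (2 * π * x) := by
  rw [UnitAddCircle.norm_eq, ← abs_of_pos two_pi_pos, ← abs_mul, cos_abs,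
    abs_of_pos two_pi_pos, mul_sub, mul_comm _ (round x : ℝ), cos_sub_int_mul_two_pi]

theorem strictAntiOn_cos_two_pi_mul :
    StrictAntiOn (fun x : ℝ ↦ cos (2 * π * x)) (Icc 0 (1 / 2)) := by
  intro x hx y hy hxy
  refine strictAntiOn_cos ⟨?_, ?_⟩ ⟨?_, ?_⟩ ?_ <;>
    nlinarith [pi_pos, hx.1, hx.2, hy.1, hy.2]

end NearestInteger

section Primitive

/-- The primitive of `f` vanishing at the origin. -/
def primitive (f : ℝ → ℝ) (x : ℝ) : ℝ := ∫ t in (0 : ℝ)..x, f t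

variable {f : ℝ → ℝ}

theorem hasDerivAt_primitive (hf : Continuous f) (x : ℝ) : HasDerivAt (primitive f) (f x) x :=
  hf.integral_hasStrictDerivAt 0 x |>.hasDerivAt

theorem contDiff_primitive (hf : ContDiff ℝ ∞ f) : ContDiff ℝ ∞ (primitive f) := by
  have hderiv : deriv (primitive f) = f :=
    funext fun x ↦ (hasDerivAt_primitive hf.continuous x).deriv
  exact contDiff_infty_iff_deriv.2
    ⟨fun x ↦ (hasDerivAt_primitive hf.continuous x).differentiableAt, by rwa [hderiv]⟩

theorem primitive_add_intCast (hf : Continuous f) (hper : Periodic f 1) (x : ℝ) (n : ℤ) :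
    primitive f (x + n) = primitive f x + n * primitive f 1 := by
  have hint (a b : ℝ) : IntervalIntegrable f volume a b := hf.intervalIntegrable a b
  have h := hper.intervalIntegral_add_zsmul_eq n x hint
  rw [hper.intervalIntegral_add_eq x 0, zero_add, zsmul_eq_mul, zsmul_eq_mul, mul_one] at h
  rw [primitive, ← intervalIntegral.integral_add_adjacent_intervals (hint 0 x) (hint x _), h]
  rfl

theorem primitive_const_sub_const_mul (hf : Continuous f) (a b x : ℝ) :
    primitive (fun t ↦ a - b * f t) x = a * x - b * primitive f x := by
  rw [primitive, intervalIntegral.integral_sub (by simp)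
    (Continuous.intervalIntegrable (by fun_prop) 0 x), intervalIntegral.integral_const_mul]
  simp [primitive, mul_comm]

theorem sub_le_intervalIntegral {a b c d : ℝ} (hf : Continuous f) (hf0 : ∀ x, 0 ≤ f x)
    (hf1 : ∀ x ∈ Icc a b, f x = 1) (hca : c ≤ a) (hab : a ≤ b) (hbd : b ≤ d) :
    b - a ≤ ∫ x in c..d, f x :=
  calc b - a = ∫ _ in a..b, (1 : ℝ) := by simp
    _ = ∫ x in a..b, f x := intervalIntegral.integral_congr fun x hx ↦
        (hf1 x (uIcc_of_le hab ▸ hx)).symm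
    _ ≤ ∫ x in c..d, f x := intervalIntegral.integral_mono_interval hca hab hbd
        (.of_forall hf0) (hf.intervalIntegrable c d)

end Primitive

section PeriodicBump

/-- A smooth `1`-periodic function with values in `[0, 1]`, equal to `1` at distance at most `r`
from `ℤ` and to `0` at distance at least `s`, for `0 ≤ r < s ≤ 1 / 2`. The cosine serves as a smooth
substitute for the distance to `ℤ`. -/
def periodicBump (r s x : ℝ) : ℝ :=
  smoothTransition ((cos (2 * π * x) - cos (2 * π * s)) / (cos (2 * π * r) - cos (2 * π * s)))

variable {r s x : ℝ}

theorem contDiff_periodicBump : ContDiff ℝ ∞ (periodicBump r s) :=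
  smoothTransition.contDiff.comp (by fun_prop)

theorem periodic_periodicBump : Periodic (periodicBump r s) 1 := fun x ↦ by
  rw [periodicBump, periodicBump, mul_add, mul_one, cos_add_two_pi]

theorem periodicBump_nonneg : 0 ≤ periodicBump r s x := smoothTransition.nonneg _

theorem periodicBump_le_one : periodicBump r s x ≤ 1 := smoothTransition.le_one _

theorem norm_unitAddCircle_mem_Icc (x : ℝ) : ‖(x : UnitAddCircle)‖ ∈ Icc 0 (1 / 2) :=
  ⟨norm_nonneg _, by
    simpa using AddCircle.norm_le_half_period 1 (x := (x : UnitAddCircle)) one_ne_zero⟩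

theorem periodicBump_eq_zero (hr : 0 ≤ r) (hrs : r < s) (hs : s ≤ 1 / 2)
    (hx : s ≤ ‖(x : UnitAddCircle)‖) : periodicBump r s x = 0 := by
  have hs' : s ∈ Icc 0 (1 / 2) := ⟨hr.trans hrs.le, hs⟩
  have hden := strictAntiOn_cos_two_pi_mul ⟨hr, hrs.le.trans hs⟩ hs' hrs
  have hnum := strictAntiOn_cos_two_pi_mul.antitoneOn hs' (norm_unitAddCircle_mem_Icc x) hx
  simp only [cos_two_pi_mul_norm_unitAddCircle] at hden hnum
  exact smoothTransition.zero_of_nonpos <|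
    div_nonpos_of_nonpos_of_nonneg (sub_nonpos.2 hnum) (sub_pos.2 hden).le

theorem periodicBump_eq_one_iff (hr : 0 ≤ r) (hrs : r < s) (hs : s ≤ 1 / 2) :
    periodicBump r s x = 1 ↔ ‖(x : UnitAddCircle)‖ ≤ r := by
  have hr' : r ∈ Icc 0 (1 / 2) := ⟨hr, hrs.le.trans hs⟩
  have hden := strictAntiOn_cos_two_pi_mul hr' ⟨hr.trans hrs.le, hs⟩ hrs
  have hnum := strictAntiOn_cos_two_pi_mul.le_iff_ge hr' (norm_unitAddCircle_mem_Icc x)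
  simp only [cos_two_pi_mul_norm_unitAddCircle] at hden hnum
  rw [← hnum, ← sub_le_sub_iff_right (cos (2 * π * s)), ← one_le_div (sub_pos.2 hden)]
  exact ⟨fun h ↦ le_of_not_gt fun hlt ↦ (smoothTransition.lt_one_of_lt_one hlt).ne h,
    smoothTransition.one_of_one_le⟩

theorem two_mul_le_primitive_periodicBump (hr : 0 ≤ r) (hrs : r < s) (hs : s ≤ 1 / 2) :
    2 * r ≤ primitive (periodicBump r s) 1 := by
  have hshift := periodic_periodicBump (r := r) (s := s) |>.intervalIntegral_add_eq 0 (-(1 / 2))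
  rw [zero_add] at hshift
  rw [primitive, hshift]
  calc 2 * r = r - -r := by ring
    _ ≤ _ := sub_le_intervalIntegral contDiff_periodicBump.continuous
      (fun _ ↦ periodicBump_nonneg) (fun x hx ↦ (periodicBump_eq_one_iff hr hrs hs).2 <|
        QuotientAddGroup.norm_mk_le_norm.trans (abs_le.2 hx)) (by linarith) (by linarith)
      (by linarith)

theorem primitive_periodicBump_le_two_mul (hr : 0 ≤ r) (hrs : r < s) (hs : s ≤ 1 / 2) :
    primitive (periodicBump r s) 1 ≤ 2 * s := by
  have hcont : Continuous (periodicBump r s) := contDiff_periodicBump.continuous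
  have h : 1 - s - s ≤ ∫ x in (0 : ℝ)..1, (1 - periodicBump r s x) :=
    sub_le_intervalIntegral (by fun_prop) (fun _ ↦ sub_nonneg.2 periodicBump_le_one)
      (fun x hx ↦ by
        rw [periodicBump_eq_zero hr hrs hs, sub_zero]
        exact le_norm_unitAddCircle_of_mem_Icc (n := 0) (by simpa using hx))
      (hr.trans hrs.le) (by linarith) (by linarith)
  rw [intervalIntegral.integral_sub (by simp) (hcont.intervalIntegrable 0 1)] at h
  simp only [intervalIntegral.integral_const, sub_zero, one_smul] at h
  rw [primitive]
  linarith

end PeriodicBump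

section Sawtooth

theorem periodic_deriv {f : ℝ → ℝ} {c : ℝ} (hf : Periodic f c) : Periodic (deriv f) c := fun x ↦ by
  rw [← deriv_comp_add_const, funext hf]

theorem exists_forall_abs_le_of_periodic {f : ℝ → ℝ} {c : ℝ} (hf : Continuous f)
    (hper : Periodic f c) (hc : c ≠ 0) : ∃ M, ∀ x, |f x| ≤ M := by
  obtain ⟨M, hM⟩ := isBounded_iff_forall_norm_le.1 (hper.isBounded_of_continuous hc hf)
  exact ⟨M, fun x ↦ hM _ (mem_range_self x)⟩

/-- A smooth periodic function that agrees with the identity, up to a constant, away from `ℤ`. -/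
structure IsSmoothSawtooth (q : ℝ → ℝ) : Prop where
  contDiff : ContDiff ℝ ∞ q
  periodic : Periodic q 1
  deriv_eq_one {x : ℝ} (hx : 1 / 8 ≤ ‖(x : UnitAddCircle)‖) : deriv q x = 1

theorem exists_isSmoothSawtooth : ∃ q, IsSmoothSawtooth q := by
  set b := periodicBump (1 / 16) (1 / 8)
  have hb : ContDiff ℝ ∞ b := contDiff_periodicBump
  have hmass : 0 < primitive b 1 := lt_of_lt_of_le (by norm_num)
    (two_mul_le_primitive_periodicBump (r := 1 / 16) (s := 1 / 8) (by norm_num) (by norm_num)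
      (by norm_num))
  have hderiv (x : ℝ) : HasDerivAt (fun x ↦ x - primitive b x / primitive b 1)
      (1 - b x / primitive b 1) x :=
    (hasDerivAt_id x).sub ((hasDerivAt_primitive hb.continuous x).div_const _)
  refine ⟨fun x ↦ x - primitive b x / primitive b 1,
    contDiff_id.sub ((contDiff_primitive hb).div_const _), fun x ↦ ?_, fun {x} hx ↦ ?_⟩
  · have h := primitive_add_intCast hb.continuous periodic_periodicBump x 1
    rw [Int.cast_one, one_mul] at h
    rw [h, add_div, div_self hmass.ne']
    ring
  · rw [(hderiv x).deriv, show b x = 0 from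
      periodicBump_eq_zero (by norm_num) (by norm_num) (by norm_num) hx, zero_div, sub_zero]

end Sawtooth

section FormPreserving

variable {E F E' F' G : Type*}
  [NormedAddCommGroup E] [NormedSpace ℝ E] [NormedAddCommGroup F] [NormedSpace ℝ F]
  [NormedAddCommGroup E'] [NormedSpace ℝ E'] [NormedAddCommGroup F'] [NormedSpace ℝ F']
  [NormedAddCommGroup G] [NormedSpace ℝ G]

/-- The direct sum `α ⊕ β` of two constant-coefficient two-forms, on the product space. -/
def sumForm (α : E → E → ℝ) (β : F → F → ℝ) (u v : E × F) : ℝ :=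
  α u.1 v.1 + β u.2 v.2

/-- The map `f` is smooth at `p` and its differential there pulls the constant two-form `β` back
to `α`. Forms are encoded as plain functions of two vectors. -/
structure IsFormPreservingAt (α : E → E → ℝ) (β : F → F → ℝ) (f : E → F) (p : E) : Prop where
  contDiffAt : ContDiffAt ℝ ∞ f p
  pullback (u v : E) : β (fderiv ℝ f p u) (fderiv ℝ f p v) = α u v

namespace IsFormPreservingAt

variable {α : E → E → ℝ} {β : F → F → ℝ} {α' : E' → E' → ℝ} {β' : F' → F' → ℝ} {γ : G → G → ℝ}
  {f : E → F} {g : E' → F'} {h : F → G} {p : E} {p' : E'}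

theorem hasFDerivAt (hf : IsFormPreservingAt α β f p) : HasFDerivAt f (fderiv ℝ f p) p :=
  (hf.contDiffAt.differentiableAt (by simp)).hasFDerivAt

theorem of_hasFDerivAt {f' : E →L[ℝ] F} (hsmooth : ContDiffAt ℝ ∞ f p) (hf : HasFDerivAt f f' p)
    (hpull : ∀ u v, β (f' u) (f' v) = α u v) : IsFormPreservingAt α β f p :=
  ⟨hsmooth, by rwa [hf.fderiv]⟩

theorem comp (hh : IsFormPreservingAt β γ h (f p)) (hf : IsFormPreservingAt α β f p) :
    IsFormPreservingAt α γ (h ∘ f) p where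
  contDiffAt := hh.contDiffAt.comp p hf.contDiffAt
  pullback u v := by
    rw [(hh.hasFDerivAt.comp p hf.hasFDerivAt).fderiv]
    exact (hh.pullback _ _).trans (hf.pullback u v)

theorem prodMap (hf : IsFormPreservingAt α β f p) (hg : IsFormPreservingAt α' β' g p') :
    IsFormPreservingAt (sumForm α α') (sumForm β β') (Prod.map f g) (p, p') where
  contDiffAt := hf.contDiffAt.prodMap hg.contDiffAt
  pullback u v := by
    rw [(hf.hasFDerivAt.prodMap (p := (p, p')) hg.hasFDerivAt).fderiv]
    exact congrArg₂ (· + ·) (hf.pullback u.1 v.1) (hg.pullback u.2 v.2)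

end IsFormPreservingAt

theorem isFormPreservingAt_continuousLinearMap {α : E → E → ℝ} {β : F → F → ℝ} (L : E →L[ℝ] F)
    (hL : ∀ u v, β (L u) (L v) = α u v) (p : E) : IsFormPreservingAt α β L p where
  contDiffAt := L.contDiff.contDiffAt
  pullback := by rwa [L.fderiv]

end FormPreserving

section Polar

/-- The standard area form of `ℝ × ℝ`, the working model of the plane. -/
def area (u v : ℝ × ℝ) : ℝ := u.1 * v.2 - u.2 * v.1

/-- The plane lattice `ℤ × ℤ`. -/
def intLattice : Set (ℝ × ℝ) := range ((↑) : ℤ → ℝ) ×ˢ range ((↑) : ℤ → ℝ)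

theorem isClosed_intLattice : IsClosed intLattice :=
  Int.isClosedEmbedding_coe_real.isClosed_range.prod Int.isClosedEmbedding_coe_real.isClosed_range

/-- Symplectic polar coordinates: the circle at action `I` encloses area `I + N > 0`, and the angle
`θ` has period one. -/
def polar (N : ℝ) (z : ℝ × ℝ) : ℝ × ℝ :=
  (√((z.1 + N) / π) * cos (2 * π * z.2), √((z.1 + N) / π) * sin (2 * π * z.2))

variable {N : ℝ} {z z' : ℝ × ℝ}

theorem polar_add_intCast (z : ℝ × ℝ) (n : ℤ) : polar N (z + (0, (n : ℝ))) = polar N z := by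
  simp only [polar, Prod.fst_add, Prod.snd_add, add_zero, mul_add, mul_comm _ (n : ℝ),
    cos_add_int_mul_two_pi, sin_add_int_mul_two_pi]

theorem isFormPreservingAt_polar (hz : 0 < z.1 + N) :
    IsFormPreservingAt area area (polar N) z := by
  have hpos : 0 < (z.1 + N) / π := by positivity
  have hr : HasFDerivAt (fun z : ℝ × ℝ ↦ √((z.1 + N) / π)) _ z :=
    ((hasFDerivAt_fst.add_const N).mul_const π⁻¹).sqrt hpos.ne'
  have hθ : HasFDerivAt (fun z : ℝ × ℝ ↦ 2 * π * z.2) _ z :=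
    (hasFDerivAt_snd (𝕜 := ℝ)).const_mul (2 * π)
  have hr0 : √((z.1 + N) / π) ≠ 0 := (sqrt_pos.2 hpos).ne'
  refine .of_hasFDerivAt ?_ ((hr.mul hθ.cos).prodMk (hr.mul hθ.sin)) fun u v ↦ ?_
  · have hne : (z.1 + N) / π ≠ 0 := hpos.ne'
    unfold polar
    fun_prop (disch := exact hne)
  · simp only [area, ← div_eq_mul_inv, ContinuousLinearMap.prod_apply, add_apply, smul_apply,
      ContinuousLinearMap.coe_fst', ContinuousLinearMap.coe_snd', smul_eq_mul]
    generalize 2 * π * z.2 = φ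
    field_simp
    linear_combination 4 * π ^ 2 * √((z.1 + N) / π) ^ 2 * (u.1 * v.2 - u.2 * v.1) *
      sin_sq_add_cos_sq φ

theorem polar_fst_sq_add_snd_sq (hz : 0 < z.1 + N) :
    (polar N z).1 ^ 2 + (polar N z).2 ^ 2 = (z.1 + N) / π := by
  simp only [polar, mul_pow]
  rw [sq_sqrt (by positivity), ← mul_add, cos_sq_add_sin_sq, mul_one]

theorem fst_eq_and_sub_mem_range_of_polar_eq (hz : 0 < z.1 + N) (hz' : 0 < z'.1 + N)
    (h : polar N z = polar N z') :
    z.1 = z'.1 ∧ z.2 - z'.2 ∈ range ((↑) : ℤ → ℝ) := by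
  have hradius : (z.1 + N) / π = (z'.1 + N) / π := by
    rw [← polar_fst_sq_add_snd_sq hz, ← polar_fst_sq_add_snd_sq hz', h]
  obtain ⟨hcos, hsin⟩ := Prod.ext_iff.1 h
  simp only [polar, ← hradius] at hcos hsin
  have hr : √((z.1 + N) / π) ≠ 0 := (sqrt_pos.2 (by positivity)).ne'
  obtain ⟨k, hk⟩ := Angle.angle_eq_iff_two_pi_dvd_sub.1
    (Angle.cos_sin_inj (mul_left_cancel₀ hr hcos) (mul_left_cancel₀ hr hsin))
  refine ⟨add_right_cancel ((div_left_inj' pi_ne_zero).1 hradius), k, ?_⟩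
  exact mul_left_cancel₀ two_pi_pos.ne' (by linarith)

end Polar

section Wrap

/-- Action-angle coordinates `((I₁, θ₁), (I₂, θ₂))` built from a disk point `(P, Q)` and a torus
point `Y`. The linear part `(a⁻¹ Q, Y₁ - a P)`, `(c⁻¹ P, Y₂ + c Q)` pulls
`dI₁ ∧ dθ₁ + dI₂ ∧ dθ₂` back to the product form up to a multiple of `dθ₁ ∧ dθ₂`. The terms in `q`
remove that multiple where `θ₁` or `θ₂` is away from `ℤ`, since `dθ₁ ∧ dθ₂` has there the primitive
`q(θ₁) dθ₂ - q(θ₂) (1 - q'(θ₁)) dθ₁`, well defined on the torus. -/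
def wrap (q : ℝ → ℝ) (a c : ℝ) (w : (ℝ × ℝ) × (ℝ × ℝ)) : (ℝ × ℝ) × (ℝ × ℝ) :=
  ((a⁻¹ * w.1.2 - (a * c)⁻¹ * (q (w.2.2 + c * w.1.2) * (1 - deriv q (w.2.1 - a * w.1.1))),
      w.2.1 - a * w.1.1),
    (c⁻¹ * w.1.1 + (a * c)⁻¹ * q (w.2.1 - a * w.1.1), w.2.2 + c * w.1.2))

variable {q : ℝ → ℝ} {a c : ℝ}

theorem periodic_add_of_mem_range {f : ℝ → ℝ} (hf : Periodic f 1) (x : ℝ) {m : ℝ}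
    (hm : m ∈ range ((↑) : ℤ → ℝ)) : f (x + m) = f x := by
  obtain ⟨n, rfl⟩ := hm
  simpa using hf.int_mul n x

theorem wrap_add (hq : Periodic q 1) (x y : ℝ × ℝ) {m : ℝ × ℝ} (hm : m ∈ intLattice) :
    wrap q a c (x, y + m) = wrap q a c (x, y) + ((0, m.1), (0, m.2)) := by
  have h₁ (f : ℝ → ℝ) (hf : Periodic f 1) : f (y.1 + m.1 - a * x.1) = f (y.1 - a * x.1) := by
    rw [add_sub_right_comm, periodic_add_of_mem_range hf _ hm.1]
  have h₂ : q (y.2 + m.2 + c * x.2) = q (y.2 + c * x.2) := by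
    rw [add_right_comm, periodic_add_of_mem_range hq _ hm.2]
  simp only [wrap, Prod.fst_add, Prod.snd_add, h₁ q hq, h₁ _ (periodic_deriv hq), h₂,
    Prod.mk_add_mk, add_zero, Prod.mk.injEq, true_and]
  constructor <;> ring

theorem eq_and_sub_mem_intLattice_of_wrap (hq : Periodic q 1) (ha : a ≠ 0) (hc : c ≠ 0)
    {w w' : (ℝ × ℝ) × (ℝ × ℝ)} (hI₁ : (wrap q a c w).1.1 = (wrap q a c w').1.1)
    (hI₂ : (wrap q a c w).2.1 = (wrap q a c w').2.1)
    (hθ₁ : (wrap q a c w).1.2 - (wrap q a c w').1.2 ∈ range ((↑) : ℤ → ℝ))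
    (hθ₂ : (wrap q a c w).2.2 - (wrap q a c w').2.2 ∈ range ((↑) : ℤ → ℝ)) :
    w.1 = w'.1 ∧ w.2 - w'.2 ∈ intLattice := by
  have heq {f : ℝ → ℝ} (hf : Periodic f 1) {s t : ℝ} (h : s - t ∈ range ((↑) : ℤ → ℝ)) :
      f s = f t := by
    rw [← periodic_add_of_mem_range hf t h, add_sub_cancel]
  simp only [wrap] at hI₁ hI₂ hθ₁ hθ₂
  rw [heq hq hθ₂, heq (periodic_deriv hq) hθ₁] at hI₁
  rw [heq hq hθ₁] at hI₂
  have hP : w.1.1 = w'.1.1 := mul_left_cancel₀ (inv_ne_zero hc) (add_right_cancel hI₂)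
  have hQ : w.1.2 = w'.1.2 := mul_left_cancel₀ (inv_ne_zero ha) (sub_left_injective hI₁)
  refine ⟨Prod.ext hP hQ, ?_, ?_⟩
  · simpa [hP] using hθ₁
  · simpa [hQ] using hθ₂

theorem exists_forall_pos_wrap_add (hq : IsSmoothSawtooth q) (a c R : ℝ) :
    ∃ N, ∀ x y : ℝ × ℝ, ‖x‖ ≤ R →
      0 < (wrap q a c (x, y)).1.1 + N ∧ 0 < (wrap q a c (x, y)).2.1 + N := by
  obtain ⟨M, hM⟩ := exists_forall_abs_le_of_periodic hq.contDiff.continuous hq.periodic one_ne_zero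
  obtain ⟨M', hM'⟩ := exists_forall_abs_le_of_periodic
    (f := fun x ↦ 1 - deriv q x) (continuous_const.sub (hq.contDiff.continuous_deriv (by simp)))
    (fun x ↦ by simp only [periodic_deriv hq.periodic x]) one_ne_zero
  have hmul {s t S T : ℝ} (hs : |s| ≤ S) (ht : |t| ≤ T) : |s * t| ≤ S * T := by
    rw [abs_mul]
    exact mul_le_mul hs ht (abs_nonneg t) ((abs_nonneg s).trans hs)
  refine ⟨|a⁻¹| * R + |c⁻¹| * R + |(a * c)⁻¹| * (M * M') + |(a * c)⁻¹| * M + 1,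
    fun x y hx ↦ ?_⟩
  have hQ := hmul (le_refl |a⁻¹|) ((norm_snd_le x).trans hx)
  have hP := hmul (le_refl |c⁻¹|) ((norm_fst_le x).trans hx)
  have hq₂ := hmul (le_refl |(a * c)⁻¹|)
    (hmul (hM (y.2 + c * x.2)) (hM' (y.1 - a * x.1)))
  have hq₁ := hmul (le_refl |(a * c)⁻¹|) (hM (y.1 - a * x.1))
  simp only [wrap]
  constructor <;> linarith [neg_le_of_abs_le hQ, neg_le_of_abs_le hP, le_of_abs_le hq₂,
    neg_le_of_abs_le hq₁, (abs_nonneg _).trans hQ, (abs_nonneg _).trans hP,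
    (abs_nonneg _).trans hq₂, (abs_nonneg _).trans hq₁]

theorem isFormPreservingAt_wrap (hq : ContDiff ℝ ∞ q) (ha : a ≠ 0) (hc : c ≠ 0)
    {w : (ℝ × ℝ) × (ℝ × ℝ)}
    (hw : deriv q (wrap q a c w).1.2 = 1 ∨ deriv q (wrap q a c w).2.2 = 1) :
    IsFormPreservingAt (sumForm area fun u v ↦ (a * c)⁻¹ * area u v) (sumForm area area)
      (wrap q a c) w := by
  have hq' : ContDiff ℝ ∞ (deriv q) := (contDiff_infty_iff_deriv.1 hq).2
  have hfst : HasFDerivAt (Prod.fst : (ℝ × ℝ) × (ℝ × ℝ) → ℝ × ℝ) _ w := hasFDerivAt_fst (𝕜 := ℝ)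
  have hsnd : HasFDerivAt (Prod.snd : (ℝ × ℝ) × (ℝ × ℝ) → ℝ × ℝ) _ w := hasFDerivAt_snd (𝕜 := ℝ)
  have hθ₁ : HasFDerivAt (fun w : (ℝ × ℝ) × (ℝ × ℝ) ↦ w.2.1 - a * w.1.1) _ w :=
    hsnd.fst.sub (hfst.fst.const_mul a)
  have hθ₂ : HasFDerivAt (fun w : (ℝ × ℝ) × (ℝ × ℝ) ↦ w.2.2 + c * w.1.2) _ w :=
    hsnd.snd.add (hfst.snd.const_mul c)
  have hderiv {f : ℝ → ℝ} (hf : ContDiff ℝ ∞ f) (x : ℝ) : HasDerivAt f (deriv f x) x :=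
    (hf.differentiable (by simp) x).hasDerivAt
  have hq₁ := (hderiv hq _).comp_hasFDerivAt w hθ₁
  have hq₁' := (hderiv hq' _).comp_hasFDerivAt w hθ₁
  have hq₂ := (hderiv hq _).comp_hasFDerivAt w hθ₂
  have hI₁ := (hfst.snd.const_mul a⁻¹).sub ((hq₂.mul (hq₁'.const_sub 1)).const_mul (a * c)⁻¹)
  have hI₂ := (hfst.fst.const_mul c⁻¹).add (hq₁.const_mul (a * c)⁻¹)
  refine .of_hasFDerivAt ?_ ((hI₁.prodMk hθ₁).prodMk (hI₂.prodMk hθ₂)) fun u v ↦ ?_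
  · unfold wrap
    fun_prop
  · have hprod : (1 - deriv q (w.2.1 - a * w.1.1)) * (1 - deriv q (w.2.2 + c * w.1.2)) = 0 := by
      rcases hw with h | h <;> simp only [wrap] at h <;> simp [h]
    simp only [sumForm, area, comp_apply, ContinuousLinearMap.prod_apply,
      sub_apply, add_apply, neg_apply, smul_apply, ContinuousLinearMap.comp_apply,
      ContinuousLinearMap.coe_fst', ContinuousLinearMap.coe_snd', smul_eq_mul]
    generalize deriv q (w.2.1 - a * w.1.1) = s at hprod ⊢
    field_simp
    linear_combination (-((u.2.1 - a * u.1.1) * (v.2.2 + c * v.1.2) -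
      (u.2.2 + c * u.1.2) * (v.2.1 - a * v.1.1))) * hprod

end Wrap

section SlitProfile

/-- Profiles of the generating function `y P(u) - (2π)⁻¹ sin (2πy) (P(u) - S(u))`, with `P` and `S`
the primitives of `ρ` and `σ`, that opens the lattice punctures into slits. Where `σ` vanishes, `S`
is an integral multiple of its mean `∫ ρ`, so the critical points in `u` of the `y`-derivative
`(1 - cos (2πy)) P(u) + cos (2πy) S(u)` lie over the lattice only. -/
structure IsSlitProfile (ρ σ : ℝ → ℝ) : Prop where
  contDiff_ρ : ContDiff ℝ ∞ ρ
  contDiff_σ : ContDiff ℝ ∞ σ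
  periodic_ρ : Periodic ρ 1
  periodic_σ : Periodic σ 1
  primitive_σ_one : primitive σ 1 = primitive ρ 1
  ρ_le_one (u : ℝ) : ρ u ≤ 1
  σ_nonneg (u : ℝ) : 0 ≤ σ u
  σ_lt_two_mul_ρ (u : ℝ) : σ u < 2 * ρ u
  ρ_eq_one_of_σ_ne_zero {u : ℝ} (hu : σ u ≠ 0) : ρ u = 1
  exists_int_of_σ_eq_zero {u : ℝ} (hu : σ u = 0) : ∃ k : ℤ, primitive σ u = k * primitive ρ 1
  ρ_le_half {u : ℝ} (hu : ‖(u : UnitAddCircle)‖ ≤ 1 / 4) : ρ u ≤ 1 / 2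

theorem primitive_eq_round_mul {f : ℝ → ℝ} (hf : Continuous f) (hper : Periodic f 1) {r u : ℝ}
    (hzero : ∀ t : ℝ, ‖(t : UnitAddCircle)‖ ≤ r → f t = 0) (hu : ‖(u : UnitAddCircle)‖ ≤ r) :
    primitive f u = round u * primitive f 1 := by
  have hlocal : primitive f (u - round u) = 0 := by
    refine (intervalIntegral.integral_congr fun t ht ↦ hzero t ?_).trans
      intervalIntegral.integral_zero
    rw [UnitAddCircle.norm_eq] at hu
    have ht' : |t| ≤ |u - round u| := by simpa using abs_sub_left_of_mem_uIcc ht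
    exact QuotientAddGroup.norm_mk_le_norm.trans (ht'.trans hu)
  simpa [hlocal] using primitive_add_intCast hf hper (u - round u) (round u)

section Existence

/-- The density `ρ` of the profile constructed here: it equals the small constant `w` except near
`ℤ + 1 / 2`, where it rises to one. -/
def slitDensity (w u : ℝ) : ℝ := 1 - (1 - w) * periodicBump (1 / 2 - 5 * w) (1 / 2 - 4 * w) u

/-- The gap `σ` of the profile constructed here, supported where `slitDensity w` is one and scaled
to have the same mean. -/
def slitGap (w u : ℝ) : ℝ :=
  let b := periodicBump (1 / 2 - 4 * w) (1 / 2 - 3 * w)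
  let κ := primitive (slitDensity w) 1 / (1 - primitive b 1)
  κ - κ * b u

variable {w u : ℝ}

theorem contDiff_slitDensity : ContDiff ℝ ∞ (slitDensity w) :=
  contDiff_const.sub (contDiff_const.mul contDiff_periodicBump)

theorem contDiff_slitGap : ContDiff ℝ ∞ (slitGap w) :=
  contDiff_const.sub (contDiff_const.mul contDiff_periodicBump)

theorem periodic_slitDensity : Periodic (slitDensity w) 1 := fun u ↦ by
  simp only [slitDensity, periodic_periodicBump u]

theorem periodic_slitGap : Periodic (slitGap w) 1 := fun u ↦ by
  simp only [slitGap, periodic_periodicBump u]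

theorem slitDensity_le_one (hw : w ≤ 1 / 20) : slitDensity w u ≤ 1 :=
  sub_le_self _ (mul_nonneg (by linarith) periodicBump_nonneg)

theorem slitDensity_pos (hw0 : 0 < w) (hw : w ≤ 1 / 20) : 0 < slitDensity w u := by
  have := mul_le_of_le_one_right (by linarith : 0 ≤ 1 - w)
    (periodicBump_le_one (r := 1 / 2 - 5 * w) (s := 1 / 2 - 4 * w) (x := u))
  rw [slitDensity]
  linarith

theorem slitDensity_eq_self (hw0 : 0 < w) (hw : w ≤ 1 / 20)
    (hu : ‖(u : UnitAddCircle)‖ ≤ 1 / 2 - 5 * w) : slitDensity w u = w := by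
  rw [slitDensity, (periodicBump_eq_one_iff (by linarith) (by linarith) (by linarith)).2 hu]
  ring

theorem primitive_slitDensity_one_mem_Ioc (hw0 : 0 < w) (hw : w ≤ 1 / 20) :
    primitive (slitDensity w) 1 ∈ Ioc 0 (11 * w) := by
  have hval : primitive (slitDensity w) 1 = _ :=
    primitive_const_sub_const_mul contDiff_periodicBump.continuous 1 (1 - w) 1
  have hlow := two_mul_le_primitive_periodicBump (r := 1 / 2 - 5 * w) (s := 1 / 2 - 4 * w)
    (by linarith) (by linarith) (by linarith)
  have hup := primitive_periodicBump_le_two_mul (r := 1 / 2 - 5 * w) (s := 1 / 2 - 4 * w)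
    (by linarith) (by linarith) (by linarith)
  rw [hval]
  constructor <;> nlinarith

theorem slitGap_mem_Ico (hw0 : 0 < w) (hw : w ≤ 1 / 20) : slitGap w u ∈ Ico 0 2 := by
  obtain ⟨hμ0, hμ⟩ := primitive_slitDensity_one_mem_Ioc hw0 hw
  have hmass := primitive_periodicBump_le_two_mul (r := 1 / 2 - 4 * w) (s := 1 / 2 - 3 * w)
    (by linarith) (by linarith) (by linarith)
  rw [slitGap, ← mul_one_sub]
  set κ := primitive (slitDensity w) 1 / (1 - primitive (periodicBump _ _) 1)
  have hκ0 : 0 < κ := div_pos hμ0 (by linarith)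
  have hκ2 : κ < 2 := (div_lt_iff₀ (by linarith)).2 (by linarith)
  exact ⟨mul_nonneg hκ0.le (sub_nonneg.2 periodicBump_le_one),
    (mul_le_of_le_one_right hκ0.le (sub_le_self _ periodicBump_nonneg)).trans_lt hκ2⟩

theorem primitive_slitGap_one (hw0 : 0 < w) (hw : w ≤ 1 / 20) :
    primitive (slitGap w) 1 = primitive (slitDensity w) 1 := by
  have hmass := primitive_periodicBump_le_two_mul (r := 1 / 2 - 4 * w) (s := 1 / 2 - 3 * w)
    (by linarith) (by linarith) (by linarith)
  have hval : primitive (slitGap w) 1 = _ :=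
    primitive_const_sub_const_mul contDiff_periodicBump.continuous _ _ 1
  rw [hval, mul_one, ← mul_one_sub, div_mul_cancel₀]
  linarith

theorem slitGap_eq_zero_iff (hw0 : 0 < w) (hw : w ≤ 1 / 20) :
    slitGap w u = 0 ↔ ‖(u : UnitAddCircle)‖ ≤ 1 / 2 - 4 * w := by
  have hμ0 := (primitive_slitDensity_one_mem_Ioc hw0 hw).1
  have hmass := primitive_periodicBump_le_two_mul (r := 1 / 2 - 4 * w) (s := 1 / 2 - 3 * w)
    (by linarith) (by linarith) (by linarith)
  rw [slitGap, ← mul_one_sub,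
    mul_eq_zero_iff_left (div_pos hμ0 (by linarith : 0 < 1 - primitive (periodicBump _ _) 1)).ne',
    sub_eq_zero, eq_comm]
  exact periodicBump_eq_one_iff (by linarith) (by linarith) (by linarith)

theorem slitDensity_eq_one_of_slitGap_ne_zero (hw0 : 0 < w) (hw : w ≤ 1 / 20)
    (hu : slitGap w u ≠ 0) : slitDensity w u = 1 := by
  rw [Ne, slitGap_eq_zero_iff hw0 hw, not_le] at hu
  rw [slitDensity, periodicBump_eq_zero (by linarith) (by linarith) (by linarith) hu.le, mul_zero,
    sub_zero]

theorem isSlitProfile_slitDensity_slitGap (hw0 : 0 < w) (hw : w ≤ 1 / 20) :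
    IsSlitProfile (slitDensity w) (slitGap w) where
  contDiff_ρ := contDiff_slitDensity
  contDiff_σ := contDiff_slitGap
  periodic_ρ := periodic_slitDensity
  periodic_σ := periodic_slitGap
  primitive_σ_one := primitive_slitGap_one hw0 hw
  ρ_le_one _ := slitDensity_le_one hw
  σ_nonneg _ := (slitGap_mem_Ico hw0 hw).1
  σ_lt_two_mul_ρ u := by
    obtain hu | hu := eq_or_ne (slitGap w u) 0
    · rw [hu]
      exact mul_pos two_pos (slitDensity_pos hw0 hw)
    · rw [slitDensity_eq_one_of_slitGap_ne_zero hw0 hw hu, mul_one]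
      exact (slitGap_mem_Ico hw0 hw).2
  ρ_eq_one_of_σ_ne_zero := slitDensity_eq_one_of_slitGap_ne_zero hw0 hw
  exists_int_of_σ_eq_zero {u} hu := ⟨round u, primitive_slitGap_one hw0 hw ▸
    primitive_eq_round_mul contDiff_slitGap.continuous periodic_slitGap
      (fun _ ↦ (slitGap_eq_zero_iff hw0 hw).2) ((slitGap_eq_zero_iff hw0 hw).1 hu)⟩
  ρ_le_half hu := by
    rw [slitDensity_eq_self hw0 hw (by linarith)]
    linarith

theorem exists_isSlitProfile {η : ℝ} (hη : 0 < η) :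
    ∃ ρ σ, IsSlitProfile ρ σ ∧ primitive ρ 1 ≤ η := by
  have hw0 : 0 < min (1 / 20) (η / 11) := by positivity
  refine ⟨_, _, isSlitProfile_slitDensity_slitGap hw0 (min_le_left _ _),
    (primitive_slitDensity_one_mem_Ioc hw0 (min_le_left _ _)).2.trans ?_⟩
  linarith [min_le_right (1 / 20) (η / 11)]

end Existence

namespace IsSlitProfile

variable {ρ σ : ℝ → ℝ}

theorem ρ_pos (h : IsSlitProfile ρ σ) (u : ℝ) : 0 < ρ u := by
  linarith [h.σ_nonneg u, h.σ_lt_two_mul_ρ u]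

theorem primitive_ρ_one_pos (h : IsSlitProfile ρ σ) : 0 < primitive ρ 1 :=
  intervalIntegral.intervalIntegral_pos_of_pos (h.contDiff_ρ.continuous.intervalIntegrable 0 1)
    h.ρ_pos one_pos

end IsSlitProfile

end SlitProfile

section MonotoneCalculus

theorem eq_of_monotone_of_hasDerivAt_pos {f : ℝ → ℝ} {f' u v : ℝ} (hf : Monotone f)
    (hderiv : HasDerivAt f f' u) (hf' : 0 < f') (huv : f u = f v) : u = v := by
  have hne : ∀ᶠ t in 𝓝[≠] u, f t ≠ f u := hderiv.eventually_ne hf'.ne'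
  obtain h | h | h := lt_trichotomy u v
  · obtain ⟨t, ht, hlt⟩ := ((hne.filter_mono (nhdsGT_le_nhdsNE u)).and (Ioo_mem_nhdsGT h)).exists
    exact absurd (le_antisymm (huv ▸ hf hlt.2.le) (hf hlt.1.le)) ht
  · exact h
  · obtain ⟨t, ht, hlt⟩ := ((hne.filter_mono (nhdsLT_le_nhdsNE u)).and (Ioo_mem_nhdsLT h)).exists
    exact absurd (le_antisymm (hf hlt.2.le) (huv ▸ hf hlt.1.le)) ht

theorem exists_rightInverse_of_add_intCast {f : ℝ → ℝ} {μ : ℝ} (hf : Continuous f) (hμ : 0 < μ)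
    (hadd : ∀ (u : ℝ) (n : ℤ), f (u + n) = f u + n * μ) :
    ∃ g : ℝ → ℝ, (∀ x, f (g x) = x * μ) ∧ ∀ (x : ℝ) (n : ℤ), g (x + n) = g x + n := by
  have hsurj (y : ℝ) : y ∈ range f := by
    obtain ⟨m, hm⟩ := exists_int_lt ((y - f 0) / μ)
    obtain ⟨n, hn⟩ := exists_int_gt ((y - f 0) / μ)
    rw [lt_div_iff₀ hμ] at hm
    rw [div_lt_iff₀ hμ] at hn
    refine mem_range_of_exists_le_of_exists_ge hf ⟨0 + m, ?_⟩ ⟨0 + n, ?_⟩ <;> rw [hadd] <;> linarith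
  choose s hs using hsurj
  refine ⟨fun x ↦ s (Int.fract x * μ) + ⌊x⌋, fun x ↦ ?_, fun x n ↦ ?_⟩
  · rw [hadd, hs, ← add_mul, Int.fract_add_floor]
  · simp only [Int.fract_add_intCast, Int.floor_add_intCast, Int.cast_add, add_assoc]

theorem abs_sin_sub_sin_lt_sub {x y : ℝ} (h : x < y) : |sin y - sin x| < y - x := by
  have hpos : 0 < (y - x) / 2 := by linarith
  have hsin := Real.abs_sin_lt_abs hpos.ne'
  rw [abs_of_pos hpos] at hsin
  calc |sin y - sin x| = 2 * |sin ((y - x) / 2)| * |cos ((y + x) / 2)| := by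
        rw [sin_sub_sin, abs_mul, abs_mul, abs_two]
    _ ≤ 2 * |sin ((y - x) / 2)| := mul_le_of_le_one_right (by positivity) (abs_cos_le_one _)
    _ < y - x := by linarith

end MonotoneCalculus

section SlitMap

/-- The `y`-derivative of the generating function, as a function of `u` and `c = cos (2πy)`. -/
def slitBase (ρ σ : ℝ → ℝ) (c u : ℝ) : ℝ := (1 - c) * primitive ρ u + c * primitive σ u

/-- The mixed second derivative of the generating function, in terms of `u` and `c = cos (2πy)`. -/
def slitSlope (ρ σ : ℝ → ℝ) (c u : ℝ) : ℝ := (1 - c) * ρ u + c * σ u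

/-- The `u`-derivative of the generating function, plus `(1 - ρ) k`. For `k` the centre of the unit
interval containing `y`, the extra term keeps the height near `ℤ + 1 / 2` where `ρ` is small, that
is, where `u` is near `ℤ`. -/
def slitHeight (ρ σ : ℝ → ℝ) (k u y : ℝ) : ℝ :=
  ρ u * y - (ρ u - σ u) * (sin (2 * π * y) / (2 * π)) + (1 - ρ u) * k

/-- `U` is the first coordinate of the map generated by the profile: it solves
`slitBase ρ σ (cos (2πy)) u = x * ∫ ρ` for `u`, equivariantly under the lattice. On lattice points
the solution is not unique and any choice is allowed. -/
structure IsSlitCoordinate (ρ σ : ℝ → ℝ) (U : ℝ × ℝ → ℝ) : Prop extends IsSlitProfile ρ σ where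
  slitBase_eq (z : ℝ × ℝ) : slitBase ρ σ (cos (2 * π * z.2)) (U z) = z.1 * primitive ρ 1
  apply_add (z : ℝ × ℝ) {m : ℝ × ℝ} (hm : m ∈ intLattice) : U (z + m) = U z + m.1

/-- The map of the plane that opens every lattice point into a slit. -/
def slitMap (ρ σ : ℝ → ℝ) (U : ℝ × ℝ → ℝ) (z : ℝ × ℝ) : ℝ × ℝ :=
  (U z, slitHeight ρ σ (⌊z.2⌋ + 1 / 2) (U z) z.2)

variable {ρ σ : ℝ → ℝ} {U : ℝ × ℝ → ℝ} {z z' : ℝ × ℝ} {c u : ℝ}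

theorem slitHeight_intCast (k u : ℝ) (n : ℤ) :
    slitHeight ρ σ k u n = ρ u * n + (1 - ρ u) * k := by
  have hsin : sin (2 * π * n) = 0 := by
    simpa [mul_comm (2 * π)] using sin_add_int_mul_two_pi 0 n
  rw [slitHeight, hsin]
  ring

theorem slitHeight_add_intCast (k u y : ℝ) (n : ℤ) :
    slitHeight ρ σ (k + n) u (y + n) = slitHeight ρ σ k u y + n := by
  rw [slitHeight, slitHeight, mul_add (2 * π) y, mul_comm (2 * π) (n : ℝ),
    sin_add_int_mul_two_pi]
  ring

theorem hasFDerivAt_slitHeight (hρ : DifferentiableAt ℝ ρ u) (hσ : DifferentiableAt ℝ σ u)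
    (k y : ℝ) : ∃ A : ℝ, HasFDerivAt (fun p : ℝ × ℝ ↦ slitHeight ρ σ k p.1 p.2)
      (A • .fst ℝ ℝ ℝ + slitSlope ρ σ (cos (2 * π * y)) u • .snd ℝ ℝ ℝ) (u, y) := by
  have hfst : HasFDerivAt (Prod.fst : ℝ × ℝ → ℝ) (.fst ℝ ℝ ℝ) (u, y) := hasFDerivAt_fst
  have hsnd : HasFDerivAt (Prod.snd : ℝ × ℝ → ℝ) (.snd ℝ ℝ ℝ) (u, y) := hasFDerivAt_snd
  have hρ' := hρ.hasDerivAt.comp_hasFDerivAt (u, y) hfst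
  have hσ' := hσ.hasDerivAt.comp_hasFDerivAt (u, y) hfst
  have hsin := (hsnd.const_mul (2 * π)).sin.mul_const (2 * π)⁻¹
  refine ⟨deriv ρ u * y - (deriv ρ u - deriv σ u) * (sin (2 * π * y) / (2 * π)) - deriv ρ u * k,
    (((hρ'.mul hsnd).sub ((hρ'.sub hσ').mul hsin)).add
      ((hρ'.const_sub 1).mul_const k)).congr_fderiv ?_⟩
  refine ContinuousLinearMap.ext fun v ↦ ?_
  simp only [slitSlope, comp_apply, Pi.sub_apply, add_apply, sub_apply, neg_apply, smul_apply,
    smul_eq_mul]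
  field_simp
  ring

namespace IsSlitProfile

theorem hasDerivAt_slitBase (h : IsSlitProfile ρ σ) (c u : ℝ) :
    HasDerivAt (slitBase ρ σ c) (slitSlope ρ σ c u) u :=
  ((hasDerivAt_primitive h.contDiff_ρ.continuous u).const_mul _).add
    ((hasDerivAt_primitive h.contDiff_σ.continuous u).const_mul _)

theorem slitSlope_pos (h : IsSlitProfile ρ σ) (hc : |c| ≤ 1) (hne : ¬(c = 1 ∧ σ u = 0)) :
    0 < slitSlope ρ σ c u := by
  have hsplit : slitSlope ρ σ c u = ((1 + c) * σ u + (1 - c) * (2 * ρ u - σ u)) / 2 := by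
    rw [slitSlope]
    ring
  have hσ := h.σ_nonneg u
  have hρ := sub_pos.2 (h.σ_lt_two_mul_ρ u)
  obtain ⟨hc0, hc1⟩ := abs_le.1 hc
  have hl : 0 ≤ (1 + c) * σ u := mul_nonneg (by linarith) hσ
  rw [hsplit]
  obtain rfl | hc1 := hc1.eq_or_lt
  · have : 0 < σ u := hσ.lt_of_ne' fun h0 ↦ hne ⟨rfl, h0⟩
    linarith
  · linarith [mul_pos (sub_pos.2 hc1) hρ]

theorem monotone_slitBase (h : IsSlitProfile ρ σ) (hc : |c| ≤ 1) : Monotone (slitBase ρ σ c) := by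
  refine monotone_of_hasDerivAt_nonneg (h.hasDerivAt_slitBase c) fun u ↦ ?_
  by_cases hne : c = 1 ∧ σ u = 0
  · simp [slitSlope, hne.1, hne.2]
  · exact (h.slitSlope_pos hc hne).le

theorem exists_isSlitCoordinate (h : IsSlitProfile ρ σ) : ∃ U, IsSlitCoordinate ρ σ U := by
  have hadd (c u : ℝ) (n : ℤ) : slitBase ρ σ c (u + n) = slitBase ρ σ c u + n * primitive ρ 1 := by
    rw [slitBase, slitBase, primitive_add_intCast h.contDiff_ρ.continuous h.periodic_ρ,
      primitive_add_intCast h.contDiff_σ.continuous h.periodic_σ, h.primitive_σ_one]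
    ring
  choose g hg hg_add using fun c ↦ exists_rightInverse_of_add_intCast
    (continuous_iff_continuousAt.2 fun u ↦ (h.hasDerivAt_slitBase c u).continuousAt)
    h.primitive_ρ_one_pos (hadd c)
  refine ⟨fun z ↦ g (cos (2 * π * z.2)) z.1, ⟨h, fun z ↦ hg _ _, fun z m hm ↦ ?_⟩⟩
  obtain ⟨⟨k, hk⟩, l, hl⟩ := hm
  simp only [Prod.fst_add, Prod.snd_add, ← hk, ← hl, mul_add, mul_comm (2 * π) (l : ℝ),
    cos_add_int_mul_two_pi, hg_add]

theorem strictMono_slitHeight (h : IsSlitProfile ρ σ) (k u : ℝ) :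
    StrictMono (slitHeight ρ σ k u) := by
  intro y y' hy
  have hsin : |sin (2 * π * y') / (2 * π) - sin (2 * π * y) / (2 * π)| < y' - y := by
    rw [← sub_div, abs_div, abs_of_pos two_pi_pos, div_lt_iff₀ two_pi_pos]
    linarith [abs_sin_sub_sin_lt_sub (mul_lt_mul_of_pos_left hy two_pi_pos)]
  have hgap : |ρ u - σ u| ≤ ρ u :=
    abs_le.2 ⟨by linarith [h.σ_lt_two_mul_ρ u], by linarith [h.σ_nonneg u]⟩
  have hlt : (ρ u - σ u) * (sin (2 * π * y') / (2 * π) - sin (2 * π * y) / (2 * π)) <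
      ρ u * (y' - y) :=
    calc _ ≤ |ρ u - σ u| * |sin (2 * π * y') / (2 * π) - sin (2 * π * y) / (2 * π)| :=
          (le_abs_self _).trans (abs_mul _ _).le
      _ ≤ ρ u * |sin (2 * π * y') / (2 * π) - sin (2 * π * y) / (2 * π)| := by gcongr
      _ < ρ u * (y' - y) := mul_lt_mul_of_pos_left hsin (h.ρ_pos u)
  simp only [slitHeight]
  linarith

theorem strictMono_slitHeight_floor (h : IsSlitProfile ρ σ) (u : ℝ) :
    StrictMono fun y ↦ slitHeight ρ σ (⌊y⌋ + 1 / 2) u y := by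
  intro y y' hy
  refine (h.strictMono_slitHeight _ u hy).trans_le (add_le_add_right ?_ _)
  have hρ := sub_nonneg.2 (h.ρ_le_one u)
  gcongr

theorem slitHeight_floor_mem_Icc (h : IsSlitProfile ρ σ) (u y : ℝ) :
    slitHeight ρ σ (⌊y⌋ + 1 / 2) u y ∈
      Icc (⌊y⌋ + (1 - ρ u) / 2) (⌊y⌋ + 1 - (1 - ρ u) / 2) := by
  have hmono := (h.strictMono_slitHeight (⌊y⌋ + 1 / 2) u).monotone
  have hlow := hmono (Int.floor_le y)
  have hup := hmono (Int.lt_floor_add_one y).le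
  rw [slitHeight_intCast] at hlow
  rw [← Int.cast_one (R := ℝ), ← Int.cast_add, slitHeight_intCast] at hup
  push_cast at hup
  constructor <;> linarith

theorem one_fourth_le_norm_or (h : IsSlitProfile ρ σ) (u y : ℝ) :
    1 / 4 ≤ ‖(u : UnitAddCircle)‖ ∨
      1 / 4 ≤ ‖(slitHeight ρ σ (⌊y⌋ + 1 / 2) u y : UnitAddCircle)‖ := by
  refine or_iff_not_imp_left.2 fun hu ↦ ?_
  have hρ := h.ρ_le_half (le_of_not_ge hu)
  exact le_trans (by linarith) (le_norm_unitAddCircle_of_mem_Icc (h.slitHeight_floor_mem_Icc u y))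

end IsSlitProfile

namespace IsSlitCoordinate

theorem slitMap_add (hU : IsSlitCoordinate ρ σ U) (z : ℝ × ℝ) {m : ℝ × ℝ} (hm : m ∈ intLattice) :
    slitMap ρ σ U (z + m) = slitMap ρ σ U z + m := by
  have hρ := periodic_add_of_mem_range hU.periodic_ρ (U z) hm.1
  have hσ := periodic_add_of_mem_range hU.periodic_σ (U z) hm.1
  have hheight (k y : ℝ) : slitHeight ρ σ k (U z + m.1) y = slitHeight ρ σ k (U z) y := by
    rw [slitHeight, hρ, hσ, slitHeight]
  obtain ⟨l, hl⟩ := hm.2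
  simp only [slitMap, hU.apply_add z hm, hheight]
  rw [Prod.snd_add, ← hl, Int.floor_add_intCast, Int.cast_add, add_right_comm,
    slitHeight_add_intCast, hl, ← Prod.mk_add_mk]

theorem slitSlope_pos (hU : IsSlitCoordinate ρ σ U) (hz : z ∉ intLattice) :
    0 < slitSlope ρ σ (cos (2 * π * z.2)) (U z) := by
  refine hU.toIsSlitProfile.slitSlope_pos (abs_cos_le_one _) fun ⟨hcos, hσ⟩ ↦ hz ?_
  obtain ⟨k, hk⟩ := hU.exists_int_of_σ_eq_zero hσ
  obtain ⟨l, hl⟩ := (cos_eq_one_iff _).1 hcos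
  have hbase := hU.slitBase_eq z
  rw [hcos, slitBase, sub_self, zero_mul, zero_add, one_mul, hk] at hbase
  exact ⟨⟨k, mul_right_cancel₀ hU.primitive_ρ_one_pos.ne' hbase⟩,
    l, mul_left_cancel₀ two_pi_pos.ne' (by linarith)⟩

theorem eq_of_slitBase_eq (hU : IsSlitCoordinate ρ σ U) (hz : z ∉ intLattice)
    (hu : slitBase ρ σ (cos (2 * π * z.2)) u = z.1 * primitive ρ 1) : U z = u :=
  eq_of_monotone_of_hasDerivAt_pos (hU.monotone_slitBase (abs_cos_le_one _))
    (hU.hasDerivAt_slitBase _ _) (hU.slitSlope_pos hz) ((hU.slitBase_eq z).trans hu.symm)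

theorem slitMap_injective (hU : IsSlitCoordinate ρ σ U) : Injective (slitMap ρ σ U) := by
  intro z z' h
  obtain ⟨hu, hv⟩ := Prod.ext_iff.1 h
  simp only [slitMap] at hu hv
  rw [← hu] at hv
  have hy : z.2 = z'.2 := (hU.strictMono_slitHeight_floor (U z)).injective hv
  refine Prod.ext (mul_right_cancel₀ hU.primitive_ρ_one_pos.ne' ?_) hy
  rw [← hU.slitBase_eq z, ← hU.slitBase_eq z', hu, hy]

theorem sub_mem_intLattice_of_slitMap (hU : IsSlitCoordinate ρ σ U)
    (h : slitMap ρ σ U z - slitMap ρ σ U z' ∈ intLattice) : z - z' ∈ intLattice := by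
  set m := slitMap ρ σ U z - slitMap ρ σ U z' with hm
  have heq : slitMap ρ σ U z = slitMap ρ σ U (z' + m) := by
    rw [hU.slitMap_add z' h, hm, add_sub_cancel]
  rwa [hU.slitMap_injective heq, add_sub_cancel_left]

theorem contDiffAt (hU : IsSlitCoordinate ρ σ U) (hz : z ∉ intLattice) : ContDiffAt ℝ ∞ U z := by
  set f : (ℝ × ℝ) × ℝ → ℝ := fun p ↦ slitBase ρ σ (cos (2 * π * p.1.2)) p.2 - p.1.1 * primitive ρ 1
  have hf : ContDiff ℝ ∞ f := by
    have hP := contDiff_primitive hU.contDiff_ρ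
    have hS := contDiff_primitive hU.contDiff_σ
    simp only [f, slitBase]
    fun_prop
  have hslope : (fderiv ℝ f (z, U z) ∘L .inr ℝ (ℝ × ℝ) ℝ).IsInvertible := by
    have hvert := (hf.differentiable (by simp) (z, U z)).hasFDerivAt.comp_hasDerivAt (U z)
      ((hasDerivAt_const (U z) z).prodMk (hasDerivAt_id (U z)))
    have hslope := hvert.unique
      ((hU.hasDerivAt_slitBase (cos (2 * π * z.2)) (U z)).sub_const (z.1 * primitive ρ 1))
    refine ⟨.unitsEquivAut ℝ (.mk0 _ (hU.slitSlope_pos hz).ne'), ?_⟩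
    ext
    simpa using hslope.symm
  have hfz : f (z, U z) = 0 := sub_eq_zero.2 (hU.slitBase_eq z)
  have hf' : ContDiffAt ℝ ∞ f (z, U z) := hf.contDiffAt
  refine (hf'.contDiffAt_implicitFunction (by simp) hslope).congr_of_eventuallyEq ?_
  filter_upwards [hf'.eventually_apply_implicitFunction (by simp) hslope,
    isClosed_intLattice.isOpen_compl.mem_nhds hz] with z' hz' hmem
  exact hU.eq_of_slitBase_eq hmem (sub_eq_zero.1 (hz'.trans hfz))

theorem slitSlope_mul_fderiv_apply (hU : IsSlitCoordinate ρ σ U) (hz : z ∉ intLattice)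
    (v : ℝ × ℝ) :
    slitSlope ρ σ (cos (2 * π * z.2)) (U z) * fderiv ℝ U z v =
      v.1 * primitive ρ 1 -
        2 * π * sin (2 * π * z.2) * (primitive ρ (U z) - primitive σ (U z)) * v.2 := by
  have hU' := ((hU.contDiffAt hz).differentiableAt (by simp)).hasFDerivAt
  have hcos := ((hasFDerivAt_snd (𝕜 := ℝ) (p := z)).const_mul (2 * π)).cos
  have hP := (hasDerivAt_primitive hU.contDiff_ρ.continuous (U z)).comp_hasFDerivAt z hU'
  have hS := (hasDerivAt_primitive hU.contDiff_σ.continuous (U z)).comp_hasFDerivAt z hU'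
  have hbase := (((hcos.const_sub 1).mul hP).add (hcos.mul hS)).unique <|
    ((hasFDerivAt_fst (𝕜 := ℝ) (p := z)).mul_const (primitive ρ 1)).congr_of_eventuallyEq
      (.of_forall hU.slitBase_eq)
  have := DFunLike.congr_fun hbase v
  simp only [slitSlope, comp_apply, add_apply, neg_apply, smul_apply, smul_eq_mul,
    ContinuousLinearMap.coe_fst', ContinuousLinearMap.coe_snd'] at this ⊢
  linear_combination this

theorem slitMap_eventuallyEq (hU : IsSlitCoordinate ρ σ U) (hz : z ∉ intLattice) :
    ∃ k : ℝ, slitMap ρ σ U =ᶠ[𝓝 z] fun z ↦ (U z, slitHeight ρ σ k (U z) z.2) := by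
  by_cases hy : z.2 ∈ range ((↑) : ℤ → ℝ)
  · obtain ⟨n, hn⟩ := hy
    have hcos : cos (2 * π * z.2) = 1 := by rw [← hn, mul_comm, cos_int_mul_two_pi]
    have hσ : σ (U z) ≠ 0 := by
      simpa [hcos, slitSlope] using (hU.slitSlope_pos hz).ne'
    refine ⟨0, ?_⟩
    filter_upwards [(hU.contDiff_σ.continuous.continuousAt.comp
      (hU.contDiffAt hz).continuousAt).eventually_ne hσ] with z' hz'
    simp only [slitMap, slitHeight, hU.ρ_eq_one_of_σ_ne_zero hz', sub_self, zero_mul]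
  · refine ⟨⌊z.2⌋ + 1 / 2, ?_⟩
    have hfloor : ∀ᶠ y in 𝓝 z.2, ⌊y⌋ = ⌊z.2⌋ := by
      filter_upwards [Ioo_mem_nhds ((Int.floor_le z.2).lt_of_ne fun h ↦ hy ⟨_, h⟩)
        (Int.lt_floor_add_one z.2)] with y hy
      exact Int.floor_eq_iff.2 ⟨hy.1.le, hy.2⟩
    filter_upwards [continuousAt_snd.eventually hfloor] with z' hz'
    rw [slitMap, hz']

theorem isFormPreservingAt_slitMap (hU : IsSlitCoordinate ρ σ U) (hz : z ∉ intLattice) :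
    IsFormPreservingAt area (fun u v ↦ (primitive ρ 1)⁻¹ * area u v) (slitMap ρ σ U) z := by
  have hUz := hU.contDiffAt hz
  have hU' := (hUz.differentiableAt (by simp)).hasFDerivAt
  have hsnd : HasFDerivAt (Prod.snd : ℝ × ℝ → ℝ) (.snd ℝ ℝ ℝ) z := hasFDerivAt_snd
  obtain ⟨k, hk⟩ := hU.slitMap_eventuallyEq hz
  obtain ⟨A, hA⟩ := hasFDerivAt_slitHeight (hU.contDiff_ρ.differentiable (by simp) (U z))
    (hU.contDiff_σ.differentiable (by simp) (U z)) k z.2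
  have hheight := HasFDerivAt.comp z (f := fun z ↦ (U z, z.2)) hA (hU'.prodMk hsnd)
  have hbase := hU.slitSlope_mul_fderiv_apply hz
  refine .of_hasFDerivAt (ContDiffAt.congr_of_eventuallyEq ?_ hk)
    ((hU'.prodMk hheight).congr_of_eventuallyEq hk) fun u v ↦ ?_
  · have hρ := hU.contDiff_ρ
    have hσ := hU.contDiff_σ
    unfold slitHeight
    fun_prop
  · simp only [area, ContinuousLinearMap.prod_apply, ContinuousLinearMap.comp_apply, add_apply,
      smul_apply, ContinuousLinearMap.coe_fst', ContinuousLinearMap.coe_snd', smul_eq_mul]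
    rw [inv_mul_eq_iff_eq_mul₀ hU.primitive_ρ_one_pos.ne']
    linear_combination v.2 * hbase u - u.2 * hbase v

end IsSlitCoordinate

end SlitMap

section Embedding

/-- The equivariant embedding of the disk times the plane minus the lattice: open the punctures into
slits, pass to action-angle coordinates, and realise these by polar coordinates in two planes. -/
def diskTorusMap (q ρ σ : ℝ → ℝ) (U : ℝ × ℝ → ℝ) (a c N : ℝ) :
    (ℝ × ℝ) × (ℝ × ℝ) → (ℝ × ℝ) × (ℝ × ℝ) :=
  Prod.map (polar N) (polar N) ∘ wrap q a c ∘ Prod.map id (slitMap ρ σ U)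

variable {q ρ σ : ℝ → ℝ} {U : ℝ × ℝ → ℝ} {a c N : ℝ} {p p' : (ℝ × ℝ) × (ℝ × ℝ)} {x : ℝ × ℝ}

theorem diskTorusMap_add (hq : IsSmoothSawtooth q) (hU : IsSlitCoordinate ρ σ U) (x z : ℝ × ℝ)
    {m : ℝ × ℝ} (hm : m ∈ intLattice) :
    diskTorusMap q ρ σ U a c N (x, z + m) = diskTorusMap q ρ σ U a c N (x, z) := by
  simp only [diskTorusMap, comp_apply, Prod.map_apply, id_eq, hU.slitMap_add z hm,
    wrap_add hq.periodic _ _ hm]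
  obtain ⟨⟨k, hk⟩, l, hl⟩ := hm
  simp only [← hk, ← hl, Prod.map, polar_add_intCast]

theorem deriv_wrap_eq_one_or (hq : IsSmoothSawtooth q) (h : IsSlitProfile ρ σ)
    (hP : |a * x.1| ≤ 1 / 8) (hQ : |c * x.2| ≤ 1 / 8) (z : ℝ × ℝ) :
    deriv q (wrap q a c (x, slitMap ρ σ U z)).1.2 = 1 ∨
      deriv q (wrap q a c (x, slitMap ρ σ U z)).2.2 = 1 := by
  have hmove {s t : ℝ} (hs : 1 / 4 ≤ ‖(s : UnitAddCircle)‖) (ht : |s - t| ≤ 1 / 8) :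
      deriv q t = 1 :=
    hq.deriv_eq_one (by linarith [norm_unitAddCircle_le_add_abs_sub s t])
  refine (h.one_fourth_le_norm_or (U z) z.2).imp (fun hu ↦ hmove hu ?_) fun hv ↦ hmove hv ?_
  · simpa [wrap, slitMap] using hP
  · simpa [wrap, slitMap] using hQ

theorem isFormPreservingAt_diskTorusMap (hq : IsSmoothSawtooth q) (hU : IsSlitCoordinate ρ σ U)
    (hac : a * c = primitive ρ 1) (hP : |a * p.1.1| ≤ 1 / 8) (hQ : |c * p.1.2| ≤ 1 / 8)
    (hp : p.2 ∉ intLattice)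
    (hpos : ∀ y, 0 < (wrap q a c (p.1, y)).1.1 + N ∧ 0 < (wrap q a c (p.1, y)).2.1 + N) :
    IsFormPreservingAt (sumForm area area) (sumForm area area) (diskTorusMap q ρ σ U a c N) p := by
  obtain ⟨ha, hc⟩ := mul_ne_zero_iff.1 (hac.trans_ne hU.primitive_ρ_one_pos.ne')
  have hslit : IsFormPreservingAt _ _ (Prod.map id (slitMap ρ σ U)) p :=
    (isFormPreservingAt_continuousLinearMap (α := area) (.id ℝ (ℝ × ℝ)) (fun _ _ ↦ rfl)
      p.1).prodMap (hU.isFormPreservingAt_slitMap hp)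
  have hwrap : IsFormPreservingAt _ _ (wrap q a c) (p.1, slitMap ρ σ U p.2) :=
    isFormPreservingAt_wrap hq.contDiff ha hc (deriv_wrap_eq_one_or hq hU.toIsSlitProfile hP hQ p.2)
  have hpolar : IsFormPreservingAt _ _ (Prod.map (polar N) (polar N))
      ((wrap q a c ∘ Prod.map id (slitMap ρ σ U)) p) :=
    (isFormPreservingAt_polar (hpos _).1).prodMap (isFormPreservingAt_polar (hpos _).2)
  rw [hac] at hwrap
  exact .comp hpolar (.comp (f := Prod.map id _) hwrap hslit)

theorem eq_and_sub_mem_intLattice_of_diskTorusMap_eq (hq : IsSmoothSawtooth q)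
    (hU : IsSlitCoordinate ρ σ U) (ha : a ≠ 0) (hc : c ≠ 0)
    (hpos : ∀ y, 0 < (wrap q a c (p.1, y)).1.1 + N ∧ 0 < (wrap q a c (p.1, y)).2.1 + N)
    (hpos' : ∀ y, 0 < (wrap q a c (p'.1, y)).1.1 + N ∧ 0 < (wrap q a c (p'.1, y)).2.1 + N)
    (h : diskTorusMap q ρ σ U a c N p = diskTorusMap q ρ σ U a c N p') :
    p.1 = p'.1 ∧ p.2 - p'.2 ∈ intLattice := by
  obtain ⟨h₁, h₂⟩ := Prod.ext_iff.1 h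
  obtain ⟨hI₁, hθ₁⟩ := fst_eq_and_sub_mem_range_of_polar_eq (hpos _).1 (hpos' _).1 h₁
  obtain ⟨hI₂, hθ₂⟩ := fst_eq_and_sub_mem_range_of_polar_eq (hpos _).2 (hpos' _).2 h₂
  obtain ⟨hx, hslit⟩ := eq_and_sub_mem_intLattice_of_wrap hq.periodic ha hc hI₁ hI₂ hθ₁ hθ₂
  exact ⟨hx, hU.sub_mem_intLattice_of_slitMap hslit⟩

theorem exists_equivariant_embedding {R : ℝ} (hR : 0 < R) :
    ∃ F : (ℝ × ℝ) × (ℝ × ℝ) → (ℝ × ℝ) × (ℝ × ℝ),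
      (∀ x z m, m ∈ intLattice → F (x, z + m) = F (x, z)) ∧
      (∀ p, ‖p.1‖ ≤ R → p.2 ∉ intLattice →
        IsFormPreservingAt (sumForm area area) (sumForm area area) F p) ∧
      ∀ p p', ‖p.1‖ ≤ R → ‖p'.1‖ ≤ R → F p = F p' → p.1 = p'.1 ∧ p.2 - p'.2 ∈ intLattice := by
  obtain ⟨q, hq⟩ := exists_isSmoothSawtooth
  obtain ⟨ρ, σ, hρσ, hμ⟩ := exists_isSlitProfile (η := 1 / (64 * R ^ 2)) (by positivity)
  obtain ⟨U, hU⟩ := hρσ.exists_isSlitCoordinate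
  have hμ0 : 0 < primitive ρ 1 := hρσ.primitive_ρ_one_pos
  set a := 8 * R * primitive ρ 1
  set c := 1 / (8 * R)
  have ha : 0 < a := by positivity
  have hc : 0 < c := by positivity
  have hac : a * c = primitive ρ 1 := by
    simp only [a, c]
    field_simp
  have haR : a * R ≤ 1 / 8 := by
    rw [le_div_iff₀ (by positivity)] at hμ
    linarith
  have hcR : c * R ≤ 1 / 8 := le_of_eq (by simp only [c]; field_simp)
  have hbound {b t : ℝ} (hb : 0 < b) (hbR : b * R ≤ 1 / 8) (ht : |t| ≤ R) : |b * t| ≤ 1 / 8 := by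
    rw [abs_mul, abs_of_pos hb]
    exact (mul_le_mul_of_nonneg_left ht hb.le).trans hbR
  obtain ⟨N, hN⟩ := exists_forall_pos_wrap_add hq a c R
  refine ⟨diskTorusMap q ρ σ U a c N, fun x z m ↦ diskTorusMap_add hq hU x z,
    fun p hx hz ↦ isFormPreservingAt_diskTorusMap hq hU hac
      (hbound ha haR ((norm_fst_le _).trans hx)) (hbound hc hcR ((norm_snd_le _).trans hx)) hz
      fun y ↦ hN _ y hx,
    fun p p' hx hx' ↦ eq_and_sub_mem_intLattice_of_diskTorusMap_eq hq hU ha.ne' hc.ne'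
      (fun y ↦ hN _ y hx) fun y ↦ hN _ y hx'⟩

end Embedding

section EuclideanSpace

/-- The two coordinates of a point of the Euclidean plane, as a pair. -/
def toPair : Pl →L[ℝ] ℝ × ℝ :=
  (EuclideanSpace.proj 0 : Pl →L[ℝ] ℝ).prod (EuclideanSpace.proj 1)

/-- The point of `ℝ⁴` with coordinates `(p₁, q₁, p₂, q₂)` made of the pairs `(p₁, q₁)` and
`(p₂, q₂)`. -/
def ofPairs : (ℝ × ℝ) × (ℝ × ℝ) →L[ℝ] E4 :=
  (EuclideanSpace.equiv (Fin 4) ℝ).symm.toContinuousLinearMap ∘L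
    .pi ![.fst ℝ ℝ ℝ ∘L .fst ℝ _ _, .snd ℝ ℝ ℝ ∘L .fst ℝ _ _,
      .fst ℝ ℝ ℝ ∘L .snd ℝ _ _, .snd ℝ ℝ ℝ ∘L .snd ℝ _ _]

theorem toPair_injective : Injective toPair := fun x y h ↦ by
  obtain ⟨h₀, h₁⟩ := Prod.ext_iff.1 h
  ext i
  fin_cases i
  exacts [h₀, h₁]

theorem ofPairs_injective : Injective ofPairs := fun p p' h ↦
  have hcoord (i : Fin 4) : ofPairs p i = ofPairs p' i := congrArg (· i) h
  Prod.ext (Prod.ext (hcoord 0) (hcoord 1)) (Prod.ext (hcoord 2) (hcoord 3))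

theorem isFormPreservingAt_toPair (x : Pl) : IsFormPreservingAt area2 area toPair x :=
  isFormPreservingAt_continuousLinearMap (β := area) toPair (fun _ _ ↦ rfl) x

theorem isFormPreservingAt_ofPairs (p : (ℝ × ℝ) × (ℝ × ℝ)) :
    IsFormPreservingAt (sumForm area area) symp4 ofPairs p :=
  isFormPreservingAt_continuousLinearMap (β := symp4) ofPairs (fun _ _ ↦ rfl) p

theorem isLatticePt_iff_toPair_mem {z : Pl} : IsLatticePt z ↔ toPair z ∈ intLattice := by
  simp only [IsLatticePt, Fin.forall_fin_two, intLattice, mem_prod, mem_range, eq_comm, toPair]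
  rfl

theorem norm_toPair_le (x : Pl) : ‖toPair x‖ ≤ ‖x‖ :=
  max_le (PiLp.norm_apply_le x 0) (PiLp.norm_apply_le x 1)

end EuclideanSpace

/-- **Lemma 3.**  For every `R > 0` there is a smooth symplectic embedding of
`B²_R × (T² ∖ {pt})` into `ℝ⁴`, the punctured torus carrying a symplectic form of
total area one. -/
theorem disk_times_punctured_torus_embeds_in_R4 (R : ℝ) (hR : 0 < R) :
    ∃ F : Pl × Pl → E4,
      ContDiffOn ℝ (⊤ : ℕ∞) F (liftedDomain R) ∧
      -- invariance under the deck transformations: F descends to B²_R × (T² ∖ {pt})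
      (∀ x z : Pl, ∀ m : Pl, IsLatticePt m → F (x, z + m) = F (x, z)) ∧
      -- the differential pulls the standard form of ℝ⁴ back to the product form
      (∀ p ∈ liftedDomain R, ∀ u v : Pl × Pl,
        symp4 (fderiv ℝ F p u) (fderiv ℝ F p v) = area2 u.1 v.1 + area2 u.2 v.2) ∧
      -- injectivity as a map defined on B²_R × (T² ∖ {pt})
      (∀ p ∈ liftedDomain R, ∀ q ∈ liftedDomain R,
        F p = F q → p.1 = q.1 ∧ IsLatticePt (p.2 - q.2)) := by
  obtain ⟨F, hF_add, hF_form, hF_inj⟩ := exists_equivariant_embedding hR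
  have hnorm {p : Pl × Pl} (hp : p ∈ liftedDomain R) : ‖toPair p.1‖ ≤ R :=
    (norm_toPair_le _).trans (mem_ball_zero_iff.1 hp.1).le
  have hmem {p : Pl × Pl} (hp : p ∈ liftedDomain R) : toPair p.2 ∉ intLattice :=
    mt isLatticePt_iff_toPair_mem.2 hp.2
  have hform (p : Pl × Pl) (hp : p ∈ liftedDomain R) :
      IsFormPreservingAt (sumForm area2 area2) symp4 (ofPairs ∘ F ∘ Prod.map toPair toPair) p :=
    (isFormPreservingAt_ofPairs _).comp <| (hF_form _ (hnorm hp) (hmem hp)).comp <|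
      (isFormPreservingAt_toPair p.1).prodMap (isFormPreservingAt_toPair p.2)
  refine ⟨ofPairs ∘ F ∘ Prod.map toPair toPair, fun p hp ↦ (hform p hp).contDiffAt.contDiffWithinAt,
    fun x z m hm ↦ ?_, fun p hp ↦ (hform p hp).pullback, fun p hp p' hp' h ↦ ?_⟩
  · simp only [comp_apply, Prod.map_apply, map_add,
      hF_add _ _ _ (isLatticePt_iff_toPair_mem.1 hm)]
  · obtain ⟨hx, hz⟩ := hF_inj _ _ (hnorm hp) (hnorm hp') (ofPairs_injective h)
    exact ⟨toPair_injective hx, isLatticePt_iff_toPair_mem.2 (by rwa [map_sub])⟩
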